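/- arXiv:math/9802036 — 3 statements merged into one kernel-verified Lean document; each statement's English description precedes it below -/
import Mathlib

section
/- Let K be a field, n a natural number, and q ∈ K a nonzero element such that q^{2k} ≠ 1 for all 1 ≤ k ≤ n. Let f : K∖{0} → K be any function, and let D_q^n denote the n-fold iterate of the q-difference operator applied to f. Then for every nonzero x ∈ K, (D_q^n f)(x) = (q − q^{−1})^{−n} x^{−n} ∑_{i=0}^{n} (−1)^i q^{(n−1)(2i−n)/2} [n choose i] f(q^{n−2i} x), where the exponent (n−1)(2i−n)/2 is always an integer. -/
/-- The symmetric q-integer [k] = (q^k - q^{-k})/(q - q^{-1}). -/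
noncomputable def qInt {K : Type*} [Field K] (q : K) (k : ℕ) : K :=
  (q ^ (k : ℤ) - q ^ (-(k : ℤ))) / (q - q⁻¹)

/-- The symmetric q-factorial [k]! = [1][2]⋯[k]. -/
noncomputable def qFact {K : Type*} [Field K] (q : K) (k : ℕ) : K :=
  ∏ i ∈ Finset.range k, qInt q (i + 1)

/-- The symmetric q-binomial coefficient [n choose r] = [n]!/([r]![n-r]!). -/
noncomputable def qBinom {K : Type*} [Field K] (q : K) (n r : ℕ) : K :=
  qFact q n / (qFact q r * qFact q (n - r))

/-- The q-difference operator D_q acting on functions K → K. -/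
noncomputable def qDiff {K : Type*} [Field K] (q : K) (f : K → K) : K → K :=
  fun x => (f (q * x) - f (q⁻¹ * x)) / ((q - q⁻¹) * x)


theorem qInt_ne_zero_aux {K : Type*} [Field K] (q : K) (hq : q ≠ 0) (k : ℕ)
    (h1 : q ^ 2 ≠ 1) (hk : q ^ (2 * k) ≠ 1) : qInt q k ≠ 0 := by
  have hc : q - q⁻¹ ≠ 0 := by
    intro h
    apply h1
    field_simp at h
    linear_combination h
  unfold qInt
  refine div_ne_zero ?_ hc
  intro h
  apply hk
  rw [zpow_neg, zpow_natCast] at h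
  have hqk : q ^ k ≠ 0 := pow_ne_zero _ hq
  field_simp at h
  rw [mul_comm, pow_mul]
  linear_combination h

theorem qFact_succ_aux {K : Type*} [Field K] (q : K) (k : ℕ) :
    qFact q (k + 1) = qFact q k * qInt q (k + 1) := by
  simp [qFact, Finset.prod_range_succ]

theorem qFact_ne_zero_aux {K : Type*} [Field K] (q : K) (hq : q ≠ 0) (n : ℕ)
    (hroot : ∀ k : ℕ, 1 ≤ k → k ≤ n → q ^ (2 * k) ≠ 1) : qFact q n ≠ 0 := by
  unfold qFact
  refine Finset.prod_ne_zero_iff.mpr fun i hi => ?_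
  have := Finset.mem_range.mp hi
  exact qInt_ne_zero_aux q hq _ (hroot 1 le_rfl (by omega)) (hroot _ (by omega) (by omega))

theorem qInt_add_aux {K : Type*} [Field K] (q : K) (hq : q ≠ 0) (a b : ℕ) :
    q ^ a * qInt q (a + b) = qInt q b + q ^ (a + b) * qInt q a := by
  unfold qInt
  rw [mul_div_assoc', mul_div_assoc', ← add_div]
  congr 1
  simp only [zpow_neg, zpow_natCast, pow_add, mul_inv]
  have ha : q ^ a ≠ 0 := pow_ne_zero _ hq
  have hb : q ^ b ≠ 0 := pow_ne_zero _ hq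
  field_simp
  ring

theorem qBinom_zero_aux {K : Type*} [Field K] (q : K) (n : ℕ) (h : qFact q n ≠ 0) :
    qBinom q n 0 = 1 := by
  have h0 : qFact q 0 = 1 := by simp [qFact]
  simp [qBinom, h0, h]

theorem qBinom_self_aux {K : Type*} [Field K] (q : K) (n : ℕ) (h : qFact q n ≠ 0) :
    qBinom q n n = 1 := by
  have h0 : qFact q 0 = 1 := by simp [qFact]
  simp [qBinom, h0, h]

theorem qBinom_pascal_aux {K : Type*} [Field K] (q : K) (hq : q ≠ 0) (n i : ℕ) (hi : i < n)
    (hroot : ∀ k : ℕ, 1 ≤ k → k ≤ n + 1 → q ^ (2 * k) ≠ 1) :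
    q ^ (i + 1) * qBinom q (n + 1) (i + 1) =
      qBinom q n (i + 1) + q ^ (n + 1) * qBinom q n i := by
  obtain ⟨m, rfl⟩ : ∃ m, n = i + 1 + m := ⟨n - (i + 1), by omega⟩
  have hF : ∀ j ≤ i + 1 + m + 1, qFact q j ≠ 0 := fun j hj =>
    qFact_ne_zero_aux q hq j fun k h1 h2 => hroot k h1 (by omega)
  have hI : ∀ j, 1 ≤ j → j ≤ i + 1 + m + 1 → qInt q j ≠ 0 := fun j h1 h2 =>
    qInt_ne_zero_aux q hq j (hroot 1 le_rfl (by omega)) (hroot j h1 h2)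
  have e1 : i + 1 + m + 1 - (i + 1) = m + 1 := by omega
  have e2 : i + 1 + m - (i + 1) = m := by omega
  have e3 : i + 1 + m - i = m + 1 := by omega
  have key := qInt_add_aux q hq (i + 1) (m + 1)
  rw [← add_assoc] at key
  simp only [qBinom, e1, e2, e3]
  rw [qFact_succ_aux q (i + 1 + m), qFact_succ_aux q i, qFact_succ_aux q m]
  have a1 := hF i (by omega)
  have a2 := hF m (by omega)
  have a3 := hI (i + 1) (by omega) (by omega)
  have a4 := hI (m + 1) (by omega) (by omega)
  generalize qInt q (i + 1 + m + 1) = A at *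
  generalize qInt q (i + 1) = B at *
  generalize qInt q (m + 1) = C at *
  generalize qFact q (i + 1 + m) = D at *
  generalize qFact q i = E at *
  generalize qFact q m = F at *
  generalize q ^ (i + 1 + m + 1) = G at *
  generalize q ^ (i + 1) = H at *
  field_simp
  linear_combination D * key

/-- The coefficients of the iterated difference. -/
noncomputable def coefAux {K : Type*} [Field K] (q : K) (n i : ℕ) : K :=
  (-1) ^ i * q ^ ((((n : ℤ) - 1) * (2 * (i : ℤ) - (n : ℤ))) / 2) * qBinom q n i

theorem exp_aux1 (n i : ℤ) : ((n + 1 - 1) * (2 * i - (n + 1))) / 2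
    = ((n - 1) * (2 * i - n)) / 2 + (i - n) := by
  rw [← Int.add_mul_ediv_right _ _ (by norm_num)]
  congr 1
  ring

theorem exp_aux2 (n i : ℤ) : ((n + 1 - 1) * (2 * (i + 1) - (n + 1))) / 2
    = ((n - 1) * (2 * i - n)) / 2 + i := by
  rw [← Int.add_mul_ediv_right _ _ (by norm_num)]
  congr 1
  ring

theorem exp_aux3 (n i : ℤ) : ((n - 1) * (2 * (i + 1) - n)) / 2
    = ((n - 1) * (2 * i - n)) / 2 + (n - 1) := by
  rw [← Int.add_mul_ediv_right _ _ (by norm_num)]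
  congr 1
  ring

theorem coef_zero_aux {K : Type*} [Field K] (q : K) (hq : q ≠ 0) (n : ℕ)
    (hroot : ∀ k : ℕ, 1 ≤ k → k ≤ n + 1 → q ^ (2 * k) ≠ 1) :
    coefAux q (n + 1) 0 = (q ^ n)⁻¹ * coefAux q n 0 := by
  unfold coefAux
  rw [qBinom_zero_aux q _ (qFact_ne_zero_aux q hq _ hroot),
    qBinom_zero_aux q _ (qFact_ne_zero_aux q hq _ fun k h1 h2 => hroot k h1 (by omega))]
  rw [Nat.cast_succ]
  rw [exp_aux1, zpow_add₀ hq, zpow_sub₀ hq]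
  simp [mul_comm]

theorem coef_last_aux {K : Type*} [Field K] (q : K) (hq : q ≠ 0) (n : ℕ)
    (hroot : ∀ k : ℕ, 1 ≤ k → k ≤ n + 1 → q ^ (2 * k) ≠ 1) :
    coefAux q (n + 1) (n + 1) = - (q ^ n * coefAux q n n) := by
  unfold coefAux
  rw [qBinom_self_aux q _ (qFact_ne_zero_aux q hq _ hroot),
    qBinom_self_aux q _ (qFact_ne_zero_aux q hq _ fun k h1 h2 => hroot k h1 (by omega))]
  push_cast
  rw [exp_aux2, zpow_add₀ hq, zpow_natCast]
  ring

theorem coef_mid_aux {K : Type*} [Field K] (q : K) (hq : q ≠ 0) (n i : ℕ) (hi : i < n)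
    (hroot : ∀ k : ℕ, 1 ≤ k → k ≤ n + 1 → q ^ (2 * k) ≠ 1) :
    coefAux q (n + 1) (i + 1) = (q ^ n)⁻¹ * coefAux q n (i + 1) - q ^ n * coefAux q n i := by
  have key := qBinom_pascal_aux q hq n i hi hroot
  unfold coefAux
  push_cast
  rw [exp_aux2, exp_aux3, zpow_add₀ hq, zpow_add₀ hq, zpow_sub₀ hq, zpow_natCast, zpow_natCast,
    zpow_one]
  have hn : q ^ n ≠ 0 := pow_ne_zero _ hq
  generalize q ^ ((((n : ℤ) - 1) * (2 * (i : ℤ) - (n : ℤ))) / 2) = Z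
  rw [pow_succ, pow_succ] at key
  field_simp
  linear_combination (-1) ^ (i + 1) * Z * key

theorem iter_aux {K : Type*} [Field K] (q : K) (hq : q ≠ 0) (f : K → K) (n : ℕ) :
    (∀ k : ℕ, 1 ≤ k → k ≤ n → q ^ (2 * k) ≠ 1) → ∀ x : K, x ≠ 0 →
    (qDiff q)^[n] f x =
      ((q - q⁻¹) ^ n)⁻¹ * (x ^ n)⁻¹ *
        ∑ i ∈ Finset.range (n + 1), coefAux q n i * f (q ^ ((n : ℤ) - 2 * (i : ℤ)) * x) := by
  induction n with
  | zero =>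
    intro _ x _
    simp [coefAux, qBinom, qFact]
  | succ n ih =>
    intro hroot x hx
    have ih' := ih fun k h1 h2 => hroot k h1 (by omega)
    rw [Function.iterate_succ_apply']
    have hd : qDiff q ((qDiff q)^[n] f) x =
      ((qDiff q)^[n] f (q * x) - (qDiff q)^[n] f (q⁻¹ * x)) / ((q - q⁻¹) * x) := rfl
    rw [hd, ih' _ (mul_ne_zero hq hx), ih' _ (mul_ne_zero (inv_ne_zero hq) hx)]
    have s1 : ∀ i : ℕ, q ^ ((n : ℤ) - 2 * (i : ℤ)) * (q * x)
        = q ^ (((n + 1 : ℕ) : ℤ) - 2 * (i : ℤ)) * x := fun i => by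
      rw [← mul_assoc, ← zpow_add_one₀ hq]
      congr 2
      push_cast
      ring
    have s2 : ∀ i : ℕ, q ^ ((n : ℤ) - 2 * (i : ℤ)) * (q⁻¹ * x)
        = q ^ (((n + 1 : ℕ) : ℤ) - 2 * ((i + 1 : ℕ) : ℤ)) * x := fun i => by
      rw [← mul_assoc, ← zpow_sub_one₀ hq]
      congr 2
      push_cast
      ring
    simp only [s1, s2]
    set g : ℕ → K := fun i => f (q ^ (((n + 1 : ℕ) : ℤ) - 2 * (i : ℤ)) * x) with hg
    have main : ∑ i ∈ Finset.range (n + 1 + 1), coefAux q (n + 1) i * g i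
        = (q ^ n)⁻¹ * ∑ i ∈ Finset.range (n + 1), coefAux q n i * g i
          - q ^ n * ∑ i ∈ Finset.range (n + 1), coefAux q n i * g (i + 1) := by
      rw [Finset.sum_range_succ, Finset.sum_range_succ',
        Finset.sum_range_succ' (fun i => coefAux q n i * g i),
        Finset.sum_range_succ (fun i => coefAux q n i * g (i + 1)),
        coef_zero_aux q hq n hroot, coef_last_aux q hq n hroot]
      have : ∑ i ∈ Finset.range n, coefAux q (n + 1) (i + 1) * g (i + 1)
          = (q ^ n)⁻¹ * ∑ i ∈ Finset.range n, coefAux q n (i + 1) * g (i + 1)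
            - q ^ n * ∑ i ∈ Finset.range n, coefAux q n i * g (i + 1) := by
        rw [Finset.mul_sum, Finset.mul_sum, ← Finset.sum_sub_distrib]
        refine Finset.sum_congr rfl fun i hi => ?_
        rw [coef_mid_aux q hq n i (Finset.mem_range.mp hi) hroot]
        ring
      rw [this]
      ring
    change ((((q - q⁻¹) ^ n)⁻¹ * ((q * x) ^ n)⁻¹ *
        ∑ i ∈ Finset.range (n + 1), coefAux q n i * g i) -
        (((q - q⁻¹) ^ n)⁻¹ * ((q⁻¹ * x) ^ n)⁻¹ *
        ∑ i ∈ Finset.range (n + 1), coefAux q n i * g (i + 1))) / ((q - q⁻¹) * x) =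
        ((q - q⁻¹) ^ (n + 1))⁻¹ * (x ^ (n + 1))⁻¹ *
        ∑ i ∈ Finset.range (n + 1 + 1), coefAux q (n + 1) i * g i
    rw [main, div_eq_mul_inv]
    simp only [mul_pow, mul_inv, inv_pow, inv_inv, pow_succ]
    generalize (q - q⁻¹) = c
    ring

/-- Iterated q-difference operator:
(D_q^n f)(x) = (q − q^{−1})^{−n} x^{−n} ∑_{i=0}^{n} (−1)^i q^{(n−1)(2i−n)/2}
[n choose i] f(q^{n−2i} x). -/
theorem iterated_q_difference {K : Type*} [Field K] (n : ℕ) (q : K) (hq : q ≠ 0)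
    (hroot : ∀ k : ℕ, 1 ≤ k → k ≤ n → q ^ (2 * k) ≠ 1) (f : K → K) (x : K) (hx : x ≠ 0) :
    (qDiff q)^[n] f x =
      ((q - q⁻¹) ^ n)⁻¹ * (x ^ n)⁻¹ *
        ∑ i ∈ Finset.range (n + 1),
          (-1) ^ i * q ^ ((((n : ℤ) - 1) * (2 * (i : ℤ) - (n : ℤ))) / 2) * qBinom q n i *
            f (q ^ ((n : ℤ) - 2 * (i : ℤ)) * x) := by
  exact iter_aux q hq f n hroot x hx
end

section
/- Let K be a field, m ≥ 1 a natural number, and q ∈ K a nonzero element such that q^{2k} ≠ 1 for all 1 ≤ k ≤ m. Then for all w, z_1, …, z_m ∈ K, the following combinatorial identity holds: ∑_{σ ∈ S_m} ∑_{r=0}^{m} sgn(σ) [m choose r] · (∏_{k=1}^{r} (w − q^{1−m} z_{σ(k)})) · (∏_{k=r+1}^{m} (z_{σ(k)} − q^{1−m} w)) · (∏_{1 ≤ i < j ≤ m} (z_{σ(i)} − q^{−2} z_{σ(j)})) = 0, where S_m is the symmetric group on {1, …, m} and sgn(σ) is the sign of the permutation σ. -/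
namespace Ser2

open Polynomial

lemma qInt_ne {K : Type*} [Field K] {q : K} (hq : q ≠ 0) (k : ℕ)
    (h1 : q ^ 2 ≠ 1) (h : q ^ (2 * k) ≠ 1) : qInt q k ≠ 0 := by
  unfold qInt
  refine div_ne_zero ?_ ?_
  · intro h0
    apply h
    rw [zpow_neg, zpow_natCast, sub_eq_zero] at h0
    have : q ^ k * q ^ k = 1 := by
      nth_rewrite 1 [h0]
      exact inv_mul_cancel₀ (pow_ne_zero _ hq)
    rw [← this]; ring
  · intro h0
    apply h1
    rw [sub_eq_zero] at h0
    have : q * q = 1 := by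
      nth_rewrite 1 [h0]
      exact inv_mul_cancel₀ hq
    rw [← this]; ring

lemma qFact_succ {K : Type*} [Field K] (q : K) (n : ℕ) :
    qFact q (n + 1) = qFact q n * qInt q (n + 1) := by
  unfold qFact; rw [Finset.prod_range_succ]

lemma qInt_add {K : Type*} [Field K] {q : K} (hq : q ≠ 0) (a b : ℕ) :
    qInt q (a + b) = q ^ a * qInt q b + (q ^ b)⁻¹ * qInt q a := by
  unfold qInt
  simp only [zpow_neg, zpow_natCast, pow_add]
  rw [← mul_div_assoc, ← mul_div_assoc, ← add_div]
  congr 1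
  field_simp
  ring

lemma qInt_add' {K : Type*} [Field K] {q : K} (hq : q ≠ 0) (a b : ℕ) :
    qInt q (a + b) = (q ^ a)⁻¹ * qInt q b + q ^ b * qInt q a := by
  rw [add_comm, qInt_add hq, add_comm]

lemma qFact_ne {K : Type*} [Field K] {q : K} {m : ℕ}
    (hI : ∀ k, 1 ≤ k → k ≤ m → qInt q k ≠ 0) (n : ℕ) (hn : n ≤ m) : qFact q n ≠ 0 := by
  unfold qFact
  rw [Finset.prod_ne_zero_iff]
  intro i hi
  rw [Finset.mem_range] at hi
  exact hI _ (by omega) (by omega)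

lemma pascal_gen {K : Type*} [Field K] {q : K} (n r : ℕ) (hr : r + 1 ≤ n) (A B : K)
    (hI : ∀ k, 1 ≤ k → k ≤ n + 1 → qInt q k ≠ 0)
    (h : qInt q (n + 1) = A * qInt q (n - r) + B * qInt q (r + 1)) :
    qBinom q (n + 1) (r + 1) = A * qBinom q n (r + 1) + B * qBinom q n r := by
  obtain ⟨s, rfl⟩ : ∃ s, n = r + 1 + s := ⟨n - (r + 1), by omega⟩
  unfold qBinom
  have e1 : r + 1 + s + 1 - (r + 1) = s + 1 := by omega
  have e2 : r + 1 + s - (r + 1) = s := by omega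
  have e3 : r + 1 + s - r = s + 1 := by omega
  rw [e3] at h
  rw [e1, e2, e3, qFact_succ q (r + 1 + s), qFact_succ q s, qFact_succ q r, h]
  have h1 := qFact_ne hI s (by omega)
  have h2 := qFact_ne hI r (by omega)
  have h3 := hI (s + 1) (by omega) (by omega)
  have h4 := hI (r + 1) (by omega) (by omega)
  field_simp

lemma qBinom_zero {K : Type*} [Field K] {q : K} (n : ℕ) (h : qFact q n ≠ 0) :
    qBinom q n 0 = 1 := by
  unfold qBinom
  have : qFact q 0 = 1 := by simp [qFact]
  rw [this, Nat.sub_zero, one_mul, div_self h]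

lemma qBinom_self {K : Type*} [Field K] {q : K} (n : ℕ) (h : qFact q n ≠ 0) :
    qBinom q n n = 1 := by
  unfold qBinom
  have : qFact q 0 = 1 := by simp [qFact]
  rw [Nat.sub_self, this, mul_one, div_self h]

/-- Telescoping identity in a commutative ring. -/
lemma telescope {R : Type*} [CommRing R] (n : ℕ) (f g : ℕ → R) (b c : ℕ → R)
    (h0 : b 0 * g n = c 0 * f 0)
    (hs : ∀ r, r + 1 ≤ n → c (r + 1) * f (r + 1) - c r * g r = b (r + 1) * g n)
    (r : ℕ) (hr : r ≤ n) :
    ∑ i ∈ Finset.range (r + 1), b i * ((∏ k ∈ Finset.range i, f k) *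
      ∏ k ∈ Finset.Ico i (n + 1), g k) =
    c r * ((∏ k ∈ Finset.range (r + 1), f k) * ∏ k ∈ Finset.Ico r n, g k) := by
  induction r with
  | zero =>
    rw [Finset.sum_range_one, Finset.prod_Ico_succ_top (by omega)]
    simp only [Finset.prod_range_zero, zero_add, Finset.prod_range_one]
    linear_combination (∏ k ∈ Finset.Ico 0 n, g k) * h0
  | succ r ih =>
    rw [Finset.sum_range_succ, ih (by omega), Finset.prod_Ico_succ_top (by omega),
      Finset.prod_range_succ f (r + 1), Finset.prod_eq_prod_Ico_succ_bot (by omega : r < n) g]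
    linear_combination (-(∏ k ∈ Finset.range (r + 1), f k) *
      ∏ k ∈ Finset.Ico (r + 1) n, g k) * hs r hr

/-- The key identity for a geometric progression, in the polynomial ring. -/
lemma key_poly {K : Type*} [Field K] (n : ℕ) (q : K) (hq : q ≠ 0)
    (hI : ∀ k, 1 ≤ k → k ≤ n + 1 → qInt q k ≠ 0) (w a t : K)
    (ha : a = (q ^ n)⁻¹) (ht : t = (q ^ 2)⁻¹) :
    ∑ r ∈ Finset.range (n + 1 + 1), C (qBinom q (n + 1) r) *
      ((∏ k ∈ Finset.range r, (C w - C (a * t ^ k) * X : K[X])) *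
        ∏ k ∈ Finset.Ico r (n + 1), (C (t ^ k) * X - C (a * w))) = 0 := by
  have hF := qFact_ne hI
  have hat : t ^ n = a * a := by rw [ha, ht, inv_pow, ← mul_inv]; congr 1; ring
  have hT := telescope n (fun k => (C w - C (a * t ^ k) * X : K[X]))
    (fun k => C (t ^ k) * X - C (a * w)) (fun r => C (qBinom q (n + 1) r))
    (fun r => C (- a * q ^ r * qBinom q n r)) ?_ ?_ n le_rfl
  · rw [Finset.sum_range_succ, hT]
    have e : - a * q ^ n * qBinom q n n = -1 := by
      rw [qBinom_self n (hF n (by omega)), ha]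
      field_simp
    rw [e, qBinom_self (n + 1) (hF (n + 1) le_rfl)]
    simp
  · rw [qBinom_zero _ (hF _ le_rfl), qBinom_zero _ (hF n (by omega)), hat]
    simp only [C_mul, C_neg, pow_zero, C_1]
    ring
  · intro r hr
    have p1 := pascal_gen n r hr (q ^ (r + 1)) (q ^ r * a) hI (by
      have := qInt_add hq (r + 1) (n - r)
      rw [show r + 1 + (n - r) = n + 1 by omega] at this
      rw [this, ha]
      congr 2
      obtain ⟨s, rfl⟩ : ∃ s, n = r + s := ⟨n - r, by omega⟩
      rw [show r + s - r = s by omega, pow_add]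
      field_simp)
    have p2 := pascal_gen n r hr (q ^ (r + 1) * t ^ (r + 1)) (q ^ r * t ^ r * a⁻¹) hI (by
      have := qInt_add' hq (r + 1) (n - r)
      rw [show r + 1 + (n - r) = n + 1 by omega] at this
      rw [this, ha, ht]
      obtain ⟨s, rfl⟩ : ∃ s, n = r + s := ⟨n - r, by omega⟩
      rw [show r + s - r = s by omega, pow_add]
      simp only [inv_pow, ← pow_mul]
      congr 2
      · field_simp
        ring
      · field_simp
        ring)
    have ha0 : a ≠ 0 := by rw [ha]; exact inv_ne_zero (pow_ne_zero _ hq)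
    have p2' : a * qBinom q (n + 1) (r + 1) = a * (q ^ (r + 1) * t ^ (r + 1)) * qBinom q n (r + 1)
        + q ^ r * t ^ r * qBinom q n r := by
      rw [p2]; field_simp
    have P1 := congrArg (C : K → K[X]) p1
    have P2 := congrArg (C : K → K[X]) p2'
    rw [hat]
    simp only [C_mul, C_neg, C_add] at P1 P2 ⊢
    linear_combination C a * C w * P1 - C a * X * P2

/-- Deformed Vandermonde product. -/
noncomputable def D {K : Type*} [Field K] {m : ℕ} (t : K) (z : Fin m → K) : K :=
  ∏ p ∈ Finset.univ.filter (fun p : Fin m × Fin m => p.1 < p.2), (z p.1 - t * z p.2)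

noncomputable def L {K : Type*} [Field K] {m : ℕ} (t : K) (z : Fin m → K)
    (S : Finset (Fin m)) : K :=
  ∑ σ : Equiv.Perm (Fin m), ((Equiv.Perm.sign σ : ℤ) : K) * (∏ k ∈ S, z (σ k)) *
    D t (fun k => z (σ k))

lemma D_swap {K : Type*} [Field K] {m : ℕ} (t : K) (z : Fin m → K) (a b : Fin m)
    (hab : (a : ℕ) + 1 = b) :
    (z b - t * z a) * D t z = (z a - t * z b) * D t (fun k => z (Equiv.swap a b k)) := by
  classical
  unfold D
  have hmem : (a, b) ∈ Finset.univ.filter (fun p : Fin m × Fin m => p.1 < p.2) := by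
    rw [Finset.mem_filter]
    exact ⟨Finset.mem_univ _, Fin.lt_def.mpr (by simp only; omega)⟩
  rw [← Finset.mul_prod_erase _ _ hmem, ← Finset.mul_prod_erase _ _ hmem]
  simp only [Equiv.swap_apply_left, Equiv.swap_apply_right]
  have hne : a ≠ b := by intro h; rw [h] at hab; omega
  have hm : ∀ p ∈ (Finset.univ.filter (fun p : Fin m × Fin m => p.1 < p.2)).erase (a, b),
      (Equiv.swap a b p.1, Equiv.swap a b p.2) ∈
        (Finset.univ.filter (fun p : Fin m × Fin m => p.1 < p.2)).erase (a, b) := by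
    rintro ⟨x, y⟩ hp
    simp only [Finset.mem_erase, Finset.mem_filter, Finset.mem_univ, true_and, ne_eq,
      Prod.mk.injEq, Equiv.swap_apply_def, Fin.lt_def, Fin.ext_iff] at hp hne ⊢
    split_ifs <;> constructor <;> omega
  have : ∏ p ∈ (Finset.univ.filter (fun p : Fin m × Fin m => p.1 < p.2)).erase (a, b),
        (z p.1 - t * z p.2) =
      ∏ p ∈ (Finset.univ.filter (fun p : Fin m × Fin m => p.1 < p.2)).erase (a, b),
        (z (Equiv.swap a b p.1) - t * z (Equiv.swap a b p.2)) := by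
    refine Finset.prod_bij' (fun p _ => (Equiv.swap a b p.1, Equiv.swap a b p.2))
      (fun p _ => (Equiv.swap a b p.1, Equiv.swap a b p.2)) hm hm ?_ ?_ ?_
    · intro p _; simp
    · intro p _; simp
    · intro p _; simp
  rw [this]
  ring

lemma L_swap {K : Type*} [Field K] {m : ℕ} (t : K) (z : Fin m → K) (a b : Fin m)
    (hab : (a : ℕ) + 1 = b) (T : Finset (Fin m)) (haT : a ∉ T) (hbT : b ∉ T) :
    L t z (insert b T) = t * L t z (insert a T) := by
  classical
  have hne : a ≠ b := by intro h; rw [h] at hab; omega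
  rw [← sub_eq_zero]
  unfold L
  rw [Finset.mul_sum, ← Finset.sum_sub_distrib]
  simp only [Finset.prod_insert haT, Finset.prod_insert hbT]
  refine Finset.sum_involution (fun σ _ => σ * Equiv.swap a b) ?_ ?_ ?_ ?_
  · intro σ _
    have hT : ∏ k ∈ T, z ((σ * Equiv.swap a b) k) = ∏ k ∈ T, z (σ k) := by
      refine Finset.prod_congr rfl fun k hk => ?_
      rw [Equiv.Perm.mul_apply, Equiv.swap_apply_of_ne_of_ne]
      · rintro rfl; exact haT hk
      · rintro rfl; exact hbT hk
    have hD := D_swap t (fun k => z (σ k)) a b hab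
    rw [hT, Equiv.Perm.sign_mul, Equiv.Perm.sign_swap hne]
    simp only [Equiv.Perm.mul_apply, Equiv.swap_apply_left, Equiv.swap_apply_right]
    push_cast
    linear_combination ((Equiv.Perm.sign σ : ℤ) : K) * (∏ k ∈ T, z (σ k)) * hD
  · intro σ _ _ h
    have h2 : Equiv.swap a b = 1 := mul_eq_left.mp h
    exact hne (Equiv.swap_eq_one_iff.mp h2)
  · intro σ _; exact Finset.mem_univ _
  · intro σ _
    simp [mul_assoc]

lemma L_eq {K : Type*} [Field K] {m : ℕ} (t : K) (ht : t ≠ 0) (z : Fin m → K) :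
    ∃ c : ℕ → K, ∀ S : Finset (Fin m), L t z S = t ^ (∑ k ∈ S, (k : ℕ)) * c S.card := by
  classical
  refine ⟨fun j => (t ^ (∑ k ∈ Finset.univ.filter (fun k : Fin m => (k : ℕ) < j), (k : ℕ)))⁻¹ *
    L t z (Finset.univ.filter (fun k : Fin m => (k : ℕ) < j)), ?_⟩
  intro S
  induction hN : ∑ k ∈ S, (k : ℕ) using Nat.strong_induction_on generalizing S with
  | _ N ih =>
  by_cases h : ∃ a b : Fin m, (a : ℕ) + 1 = b ∧ a ∉ S ∧ b ∈ S
  · obtain ⟨a, b, hab, ha, hb⟩ := h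
    have hne : a ≠ b := by intro h; rw [h] at hab; omega
    have haT : a ∉ S.erase b := fun h => ha (Finset.mem_of_mem_erase h)
    have hbT : b ∉ S.erase b := Finset.notMem_erase b S
    have h1 := L_swap t z a b hab (S.erase b) haT hbT
    rw [Finset.insert_erase hb] at h1
    have hs1 := Finset.sum_insert (f := fun k : Fin m => (k : ℕ)) haT
    have hs2 := Finset.add_sum_erase S (fun k : Fin m => (k : ℕ)) hb
    have hc : (insert a (S.erase b)).card = S.card := by
      rw [Finset.card_insert_of_notMem haT, Finset.card_erase_add_one hb]
    have h2 := ih _ (by omega) (insert a (S.erase b)) rfl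
    rw [h1, h2, hc, show N = (∑ k ∈ insert a (S.erase b), (k : ℕ)) + 1 by omega, pow_succ]
    ring
  · push Not at h
    have hdown : ∀ d : ℕ, ∀ x y : Fin m, (x : ℕ) + d = y → y ∈ S → x ∈ S := by
      intro d
      induction d with
      | zero => intro x y hxy hy; rwa [show x = y from Fin.ext (by omega)]
      | succ d ihd =>
        intro x y hxy hy
        by_contra hx
        have hlt : (x : ℕ) + 1 < m := by have := y.isLt; omega
        exact h x ⟨x + 1, hlt⟩ rfl hx (ihd ⟨x + 1, hlt⟩ y (by simp only; omega) hy)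
    have hS : S = Finset.univ.filter (fun k : Fin m => (k : ℕ) < S.card) := by
      have hsub : S ⊆ Finset.univ.filter (fun k : Fin m => (k : ℕ) < S.card) := by
        intro y hy
        simp only [Finset.mem_filter, Finset.mem_univ, true_and]
        have : Finset.Iic y ⊆ S := fun x hx => by
          have hxy : (x : ℕ) ≤ y := Fin.le_def.mp (Finset.mem_Iic.mp hx)
          exact hdown (y - x) x y (by omega) hy
        have := Finset.card_le_card this
        rw [Fin.card_Iic] at this
        omega
      refine Finset.eq_of_subset_of_card_le hsub ?_
      rw [Fin.card_filter_val_lt]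
      exact min_le_right _ _
    simp only
    rw [← hS, hN, mul_inv_cancel_left₀ (pow_ne_zero _ ht)]

lemma prod_split {R : Type*} [CommRing R] (m r : ℕ) (hr : r ≤ m) (f g : ℕ → R) :
    (∏ k : Fin m, if (k : ℕ) < r then f k else g k) =
      (∏ k ∈ Finset.range r, f k) * ∏ k ∈ Finset.Ico r m, g k := by
  rw [Fin.prod_univ_eq_prod_range (fun k => if k < r then f k else g k) m,
    ← Finset.prod_range_mul_prod_Ico _ hr]
  congr 1
  · exact Finset.prod_congr rfl fun k hk => if_pos (Finset.mem_range.mp hk)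
  · exact Finset.prod_congr rfl fun k hk => if_neg (by have := (Finset.mem_Ico.mp hk).1; omega)

/-- Transfer from symmetrised products to polynomials. -/
lemma transfer {K : Type*} [Field K] {m : ℕ} (t : K) (z : Fin m → K) (c : ℕ → K)
    (hc : ∀ S : Finset (Fin m), L t z S = t ^ (∑ k ∈ S, (k : ℕ)) * c S.card)
    (α β : Fin m → K) :
    ∑ σ : Equiv.Perm (Fin m), ((Equiv.Perm.sign σ : ℤ) : K) * (∏ k, (α k * z (σ k) + β k)) *
      D t (fun k => z (σ k)) =
    (Polynomial.basisMonomials K).constr K c (∏ k : Fin m, (C (α k * t ^ (k : ℕ)) * X + C (β k))) := by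
  classical
  simp only [Finset.prod_add, Finset.prod_mul_distrib, map_sum, Finset.mul_sum, Finset.sum_mul]
  rw [Finset.sum_comm]
  refine Finset.sum_congr rfl fun S _ => ?_
  have e : (∏ k ∈ S, (C (α k * t ^ (k : ℕ)) : K[X])) * (∏ k ∈ S, X) *
      ∏ k ∈ Finset.univ \ S, C (β k) =
      ((∏ k ∈ S, α k) * (∏ k ∈ Finset.univ \ S, β k) * t ^ (∑ k ∈ S, (k : ℕ))) •
        (Polynomial.basisMonomials K S.card) := by
    rw [Polynomial.coe_basisMonomials, Polynomial.smul_monomial, ← Polynomial.C_mul_X_pow_eq_monomial]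
    simp only [← map_prod, Finset.prod_const, Finset.prod_mul_distrib, Finset.prod_pow_eq_pow_sum,
      C_mul, smul_eq_mul, mul_one]
    ring
  rw [e, map_smul, Module.Basis.constr_basis, smul_eq_mul, mul_assoc, ← hc]
  unfold L
  rw [Finset.mul_sum]
  refine Finset.sum_congr rfl fun σ _ => ?_
  ring

end Ser2

/-- The combinatorial identity (Ser2):
∑_{σ ∈ S_m} ∑_{r=0}^{m} sgn(σ) [m choose r] (∏_{k=1}^{r} (w − q^{1−m} z_{σ(k)}))
(∏_{k=r+1}^{m} (z_{σ(k)} − q^{1−m} w)) ∏_{i<j} (z_{σ(i)} − q^{−2} z_{σ(j)}) = 0. -/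
theorem combinatorial_identity_Ser2 {K : Type*} [Field K] (m : ℕ) (hm : 1 ≤ m) (q : K)
    (hq : q ≠ 0) (hroot : ∀ k : ℕ, 1 ≤ k → k ≤ m → q ^ (2 * k) ≠ 1)
    (w : K) (z : Fin m → K) :
    ∑ σ : Equiv.Perm (Fin m), ∑ r ∈ Finset.range (m + 1),
      ((Equiv.Perm.sign σ : ℤ) : K) * qBinom q m r *
        (∏ k : Fin m,
          if (k : ℕ) < r then w - q ^ (1 - (m : ℤ)) * z (σ k)
          else z (σ k) - q ^ (1 - (m : ℤ)) * w) *
        ∏ p ∈ Finset.univ.filter (fun p : Fin m × Fin m => p.1 < p.2),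
          (z (σ p.1) - q ^ (-2 : ℤ) * z (σ p.2)) = 0 := by
  have h1 : q ^ 2 ≠ 1 := by simpa using hroot 1 le_rfl hm
  have hI : ∀ k, 1 ≤ k → k ≤ m → qInt q k ≠ 0 := fun k hk hkm =>
    Ser2.qInt_ne hq k h1 (hroot k hk hkm)
  obtain ⟨n, rfl⟩ : ∃ n, m = n + 1 := ⟨m - 1, by omega⟩
  have ea : q ^ (1 - ((n + 1 : ℕ) : ℤ)) = (q ^ n)⁻¹ := by
    rw [← zpow_natCast, ← zpow_neg]; congr 1; push_cast; ring
  have et : q ^ (-2 : ℤ) = (q ^ 2)⁻¹ := by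
    rw [zpow_neg]; norm_cast
  rw [ea, et]
  generalize ha : (q ^ n)⁻¹ = a
  generalize ht : (q ^ 2)⁻¹ = t
  have ht0 : t ≠ 0 := by rw [← ht]; exact inv_ne_zero (pow_ne_zero _ hq)
  obtain ⟨c, hc⟩ := Ser2.L_eq t ht0 z
  have hK := congrArg ((Polynomial.basisMonomials K).constr K c)
    (Ser2.key_poly n q hq hI w a t ha.symm ht.symm)
  rw [map_zero, map_sum] at hK
  rw [Finset.sum_comm, ← hK]
  refine Finset.sum_congr rfl fun r hr => ?_
  rw [Finset.mem_range] at hr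
  have hT := Ser2.transfer t z c hc (fun k => if (k : ℕ) < r then -a else 1)
    (fun k => if (k : ℕ) < r then w else - (a * w))
  rw [← Polynomial.smul_eq_C_mul, map_smul, smul_eq_mul, ← Ser2.prod_split (n + 1) r (by omega)]
  have e2 : (∏ k : Fin (n + 1), if (k : ℕ) < r then
        (Polynomial.C w - Polynomial.C (a * t ^ (k : ℕ)) * Polynomial.X : Polynomial K)
        else Polynomial.C (t ^ (k : ℕ)) * Polynomial.X - Polynomial.C (a * w)) =
      ∏ k : Fin (n + 1), (Polynomial.C ((if (k : ℕ) < r then -a else 1) * t ^ (k : ℕ)) *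
        Polynomial.X + Polynomial.C (if (k : ℕ) < r then w else - (a * w))) := by
    refine Finset.prod_congr rfl fun k _ => ?_
    split_ifs
    · simp only [Polynomial.C_mul, Polynomial.C_neg]; ring
    · simp only [Polynomial.C_mul, Polynomial.C_neg, one_mul]; ring
  rw [e2, ← hT, Finset.mul_sum]
  refine Finset.sum_congr rfl fun σ _ => ?_
  have e3 : (∏ k : Fin (n + 1), if (k : ℕ) < r then w - a * z (σ k) else z (σ k) - a * w) =
      ∏ k : Fin (n + 1), ((if (k : ℕ) < r then -a else 1) * z (σ k) +
        (if (k : ℕ) < r then w else - (a * w))) := by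
    refine Finset.prod_congr rfl fun k _ => ?_
    split_ifs <;> ring
  rw [e3]
  unfold Ser2.D
  ring
end

section
/- Let K be a field, m ≥ 1 a natural number, and q ∈ K a nonzero element such that q^{2k} ≠ 1 for all 1 ≤ k ≤ m. Then for every w ∈ K and all pairwise distinct z_1, …, z_m ∈ K, the following identity holds: ∑_{σ ∈ S_m} ∑_{r=0}^{m} [m choose r] · (∏_{k=1}^{r} (w − q^{m−1} z_{σ(k)})) · (∏_{k=r+1}^{m} (z_{σ(k)} − q^{m−1} w)) · (∏_{1 ≤ i < j ≤ m} (z_{σ(i)} − q² z_{σ(j)})/(z_{σ(i)} − z_{σ(j)})) = 0, where S_m is the symmetric group on {1, …, m}. -/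
open Finset in
theorem aux_insert {ι K : Type*} [DecidableEq ι] [Field K] (a b : ι → K) (c : ι → ι → K)
    (n : ℕ → K) (hn : ∀ s : Finset ι, ∑ i ∈ s, ∏ j ∈ s.erase i, c i j = n s.card)
    (s : Finset ι) (r : ℕ) :
    ∑ i ∈ s, a i * (∏ j ∈ s.erase i, c i j) *
      ∑ I ∈ powersetCard r (s.erase i), (∏ i ∈ I, a i) * (∏ j ∈ (s.erase i) \ I, b j) *
        ∏ i' ∈ I, ∏ j ∈ (s.erase i) \ I, c i' j =
    n (r + 1) * ∑ I ∈ powersetCard (r + 1) s, (∏ i ∈ I, a i) * (∏ j ∈ s \ I, b j) *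
        ∏ i ∈ I, ∏ j ∈ s \ I, c i j := by
  rw [mul_sum]
  have hR : ∀ I ∈ powersetCard (r + 1) s, n (r + 1) * ((∏ i ∈ I, a i) * (∏ j ∈ s \ I, b j) *
        ∏ i ∈ I, ∏ j ∈ s \ I, c i j) = ∑ i ∈ I, (∏ j ∈ I.erase i, c i j) *
        ((∏ i ∈ I, a i) * (∏ j ∈ s \ I, b j) * ∏ i ∈ I, ∏ j ∈ s \ I, c i j) := by
    intro I hI
    rw [← sum_mul, hn, (mem_powersetCard.1 hI).2]
  rw [sum_congr rfl hR]
  simp_rw [mul_sum]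
  rw [sum_sigma', sum_sigma']
  refine sum_bij' (fun p _ => ⟨insert p.1 p.2, p.1⟩) (fun p _ => ⟨p.2, p.1.erase p.2⟩) ?_ ?_ ?_ ?_ ?_
  · rintro ⟨i, I⟩ h
    simp only [mem_sigma, mem_powersetCard] at h ⊢
    obtain ⟨hi, hI, hc⟩ := h
    have hiI : i ∉ I := fun h => by simpa using hI h
    refine ⟨⟨insert_subset hi (hI.trans (erase_subset _ _)), ?_⟩, mem_insert_self _ _⟩
    rw [card_insert_of_notMem hiI, hc]
  · rintro ⟨I, i⟩ h
    simp only [mem_sigma, mem_powersetCard] at h ⊢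
    obtain ⟨⟨hI, hc⟩, hi⟩ := h
    refine ⟨hI hi, erase_subset_erase _ hI, ?_⟩
    rw [card_erase_of_mem hi, hc]; rfl
  · rintro ⟨i, I⟩ h
    simp only [mem_sigma, mem_powersetCard] at h
    obtain ⟨hi, hI, hc⟩ := h
    have hiI : i ∉ I := fun h => by simpa using hI h
    simp [erase_insert hiI]
  · rintro ⟨I, i⟩ h
    simp only [mem_sigma, mem_powersetCard] at h
    simp [insert_erase h.2]
  · rintro ⟨i, I⟩ h
    simp only [mem_sigma, mem_powersetCard] at h
    obtain ⟨hi, hI, hc⟩ := h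
    have hiI : i ∉ I := fun h => by simpa using hI h
    have h1 : s.erase i \ I = s \ insert i I := by
      ext x; simp only [mem_sdiff, mem_erase, mem_insert]; tauto
    dsimp only
    rw [h1, erase_insert hiI, prod_insert hiI, prod_insert hiI,
      ← prod_sdiff hI, h1]
    ring

open Finset Polynomial in
theorem qsum {ι K : Type*} [DecidableEq ι] [Field K] (t : K) (ht : t ≠ 1) (z : ι → K)
    (hz : Function.Injective z) (s : Finset ι) (h0 : ∀ i ∈ s, z i ≠ 0) :
    ∑ i ∈ s, ∏ j ∈ s.erase i, (z i - t * z j) / (z i - z j) = ∑ k ∈ range s.card, t ^ k := by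
  set f : K[X] := Lagrange.nodal s (fun i => t * z i) - Lagrange.nodal s z with hf
  have hdeg : f.degree < s.card := by
    rw [← Lagrange.degree_nodal (s := s) (v := fun i => t * z i)]
    refine degree_sub_lt ?_ Lagrange.nodal_ne_zero ?_
    · rw [Lagrange.degree_nodal, Lagrange.degree_nodal]
    · rw [Lagrange.nodal_monic.leadingCoeff, Lagrange.nodal_monic.leadingCoeff]
  have h := congrArg (eval 0) (Lagrange.eq_interpolate (v := z) hz.injOn hdeg)
  rw [Lagrange.interpolate_apply, eval_finsetSum] at h
  have hP : ∏ i ∈ s, (-z i) ≠ 0 := prod_ne_zero_iff.2 fun i hi => neg_ne_zero.2 (h0 i hi)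
  have hl : eval 0 f = (t ^ s.card - 1) * ∏ i ∈ s, (- z i) := by
    rw [hf, eval_sub, Lagrange.eval_nodal, Lagrange.eval_nodal]
    simp only [zero_sub]
    have : ∀ i ∈ s, -(t * z i) = t * (-z i) := fun i _ => by ring
    rw [prod_congr rfl this, prod_mul_distrib, prod_const]; ring
  have hr : ∀ i ∈ s, eval 0 (C (eval (z i) f) * Lagrange.basis s z i) =
      (t - 1) * (∏ i ∈ s, (- z i)) * ∏ j ∈ s.erase i, (z i - t * z j) / (z i - z j) := by
    intro i hi
    rw [hf, eval_mul, eval_C, eval_sub, Lagrange.eval_nodal, Lagrange.eval_nodal_at_node hi,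
      Lagrange.basis, eval_prod, ← mul_prod_erase s _ hi, ← mul_prod_erase s _ hi]
    have : ∀ j ∈ s.erase i, eval 0 (Lagrange.basisDivisor (z i) (z j)) = (-z j) * (z i - z j)⁻¹ := by
      intro j _
      simp [Lagrange.basisDivisor]; ring
    rw [prod_congr rfl this]
    simp_rw [div_eq_mul_inv]
    rw [prod_mul_distrib, prod_mul_distrib]
    ring
  rw [hl, sum_congr rfl hr, ← mul_sum] at h
  have ht' : t - 1 ≠ 0 := sub_ne_zero.2 ht
  rw [← geom_sum_mul] at h
  apply mul_left_cancel₀ (mul_ne_zero ht' hP)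
  rw [← h]; ring

open Finset in
theorem qsum' {ι K : Type*} [DecidableEq ι] [Field K] (t : K) (ht : t ≠ 1) (z : ι → K)
    (hz : Function.Injective z) (s : Finset ι) :
    ∑ i ∈ s, ∏ j ∈ s.erase i, (z i - t * z j) / (z i - z j) = ∑ k ∈ range s.card, t ^ k := by
  by_cases h0 : ∀ i ∈ s, z i ≠ 0
  · exact qsum t ht z hz s h0
  push Not at h0
  obtain ⟨o, ho, hzo⟩ := h0
  have hne : ∀ i, i ≠ o → z i ≠ 0 := fun i hi h => hi (hz (h.trans hzo.symm))
  rw [← add_sum_erase s _ ho]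
  have h1 : ∏ j ∈ s.erase o, (z o - t * z j) / (z o - z j) = t ^ (s.erase o).card := by
    rw [← prod_const]
    refine prod_congr rfl fun j hj => ?_
    have := hne j (ne_of_mem_erase hj)
    rw [hzo]; field_simp; simp [this]
  have h2 : ∀ i ∈ s.erase o, ∏ j ∈ s.erase i, (z i - t * z j) / (z i - z j) =
      ∏ j ∈ (s.erase o).erase i, (z i - t * z j) / (z i - z j) := by
    intro i hi
    have hio := ne_of_mem_erase hi
    rw [← mul_prod_erase (s.erase i) _ (mem_erase.2 ⟨hio.symm, ho⟩), erase_right_comm, hzo]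
    simp [hne i hio]
  rw [h1, sum_congr rfl h2, qsum t ht z hz _ (fun i hi => hne i (ne_of_mem_erase hi)),
    ← card_erase_add_one ho, sum_range_succ, add_comm]

open Finset in
theorem perm_sum {ι K : Type*} [DecidableEq ι] [Field K] (a b : ι → K) (c : ι → ι → K)
    (n : ℕ → K) (hn : ∀ s : Finset ι, ∑ i ∈ s, ∏ j ∈ s.erase i, c i j = n s.card)
    (m : ℕ) : ∀ (y : Fin m → ι) (_ : Function.Injective y) (r : ℕ) (_ : r ≤ m),
    ∑ σ : Equiv.Perm (Fin m), (∏ k : Fin m, if (k : ℕ) < r then a (y (σ k)) else b (y (σ k))) *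
      ∏ i, ∏ j, (if i < j then c (y (σ i)) (y (σ j)) else 1) =
    (∏ k ∈ range r, n (k + 1)) * (∏ k ∈ range (m - r), n (k + 1)) *
    ∑ I ∈ powersetCard r (univ.image y), (∏ i ∈ I, a i) * (∏ j ∈ univ.image y \ I, b j) *
        ∏ i ∈ I, ∏ j ∈ univ.image y \ I, c i j := by
  induction m with
  | zero =>
    intro y hy r hr
    obtain rfl : r = 0 := by omega
    simp
  | succ m ih =>
    intro y hy r hr
    set s := univ.image y with hs
    have hcard : s.card = m + 1 := by rw [hs, card_image_of_injective _ hy]; simp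
    let y' : Fin (m+1) → Fin m → ι := fun p k => y (Equiv.swap 0 p k.succ)
    have hy' : ∀ p, Function.Injective (y' p) := fun p =>
      hy.comp ((Equiv.injective _).comp (Fin.succ_injective _))
    have him : ∀ p, univ.image (y' p) = s.erase (y p) := by
      intro p
      apply eq_of_subset_of_card_le
      · intro x hx
        obtain ⟨k, _, rfl⟩ := mem_image.1 hx
        refine mem_erase.2 ⟨fun h => ?_, mem_image_of_mem _ (mem_univ _)⟩
        have := hy h
        rw [Equiv.swap_apply_eq_iff, Equiv.swap_apply_right] at this
        exact Fin.succ_ne_zero _ this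
      · rw [card_erase_of_mem (mem_image_of_mem _ (mem_univ _)), hcard,
          card_image_of_injective _ (hy' p)]
        simp
    have hprod : ∀ p (g : ι → K) (τ : Equiv.Perm (Fin m)),
        ∏ k, g (y' p (τ k)) = ∏ x ∈ s.erase (y p), g x := by
      intro p g τ
      rw [Equiv.prod_comp τ (fun k => g (y' p k)), ← him, prod_image (fun _ _ _ _ h => hy' p h)]
    have hsum : ∀ g : ι → K, ∑ p, g (y p) = ∑ x ∈ s, g x := by
      intro g
      rw [hs, sum_image (fun _ _ _ _ h => hy h)]
    rw [← Equiv.sum_comp Equiv.Perm.decomposeFin.symm, Fintype.sum_prod_type]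
    have key : ∀ (p : Fin (m+1)) (τ : Equiv.Perm (Fin m)),
        ∏ i, ∏ j, (if i < j then c (y (Equiv.Perm.decomposeFin.symm (p, τ) i))
          (y (Equiv.Perm.decomposeFin.symm (p, τ) j)) else 1) =
        (∏ j ∈ s.erase (y p), c (y p) j) *
        ∏ i, ∏ j, (if i < j then c (y' p (τ i)) (y' p (τ j)) else 1) := by
      intro p τ
      rw [← hprod p _ τ]
      simp [Fin.prod_univ_succ, y']
    simp_rw [key]
    cases r with
    | zero =>
      have h1 : ∀ (p : Fin (m+1)) (τ : Equiv.Perm (Fin m)),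
        (∏ k : Fin (m+1), if (k : ℕ) < 0 then a (y (Equiv.Perm.decomposeFin.symm (p, τ) k))
          else b (y (Equiv.Perm.decomposeFin.symm (p, τ) k))) =
        b (y p) * (∏ k : Fin m, if (k : ℕ) < 0 then a (y' p (τ k)) else b (y' p (τ k))) := by
        intro p τ
        simp [Fin.prod_univ_succ, y']
      have h2 : ∀ p : Fin (m+1), ∑ τ : Equiv.Perm (Fin m),
          (b (y p) * (∏ k : Fin m, if (k : ℕ) < 0 then a (y' p (τ k)) else b (y' p (τ k)))) *
          ((∏ j ∈ s.erase (y p), c (y p) j) *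
            ∏ i, ∏ j, (if i < j then c (y' p (τ i)) (y' p (τ j)) else 1)) =
          (fun x => (∏ k ∈ range m, n (k + 1)) * (∏ j ∈ s, b j) * ∏ j ∈ s.erase x, c x j) (y p) := by
        intro p
        have := ih (y' p) (hy' p) 0 (Nat.zero_le _)
        rw [him] at this
        have e : ∀ A B C D : K, (A * B) * (C * D) = (A * C) * (B * D) := by intros; ring
        simp_rw [e]
        rw [← mul_sum, this]
        rw [← mul_prod_erase s b (mem_image_of_mem y (mem_univ p))]
        simp
        ring
      simp_rw [h1, h2]
      rw [hsum (fun x => (∏ k ∈ range m, n (k + 1)) * (∏ j ∈ s, b j) * ∏ j ∈ s.erase x, c x j),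
        ← mul_sum, hn, hcard]
      simp [prod_range_succ]
      ring
    | succ r =>
      have h1 : ∀ (p : Fin (m+1)) (τ : Equiv.Perm (Fin m)),
        (∏ k : Fin (m+1), if (k : ℕ) < r + 1 then a (y (Equiv.Perm.decomposeFin.symm (p, τ) k))
          else b (y (Equiv.Perm.decomposeFin.symm (p, τ) k))) =
        a (y p) * (∏ k : Fin m, if (k : ℕ) < r then a (y' p (τ k)) else b (y' p (τ k))) := by
        intro p τ
        simp [Fin.prod_univ_succ, y']
      have h2 : ∀ p : Fin (m+1), ∑ τ : Equiv.Perm (Fin m),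
          (a (y p) * (∏ k : Fin m, if (k : ℕ) < r then a (y' p (τ k)) else b (y' p (τ k)))) *
          ((∏ j ∈ s.erase (y p), c (y p) j) *
            ∏ i, ∏ j, (if i < j then c (y' p (τ i)) (y' p (τ j)) else 1)) =
          (fun x => (∏ k ∈ range r, n (k + 1)) * (∏ k ∈ range (m - r), n (k + 1)) *
            (a x * (∏ j ∈ s.erase x, c x j) *
      ∑ I ∈ powersetCard r (s.erase x), (∏ i ∈ I, a i) * (∏ j ∈ (s.erase x) \ I, b j) *
        ∏ i' ∈ I, ∏ j ∈ (s.erase x) \ I, c i' j)) (y p) := by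
        intro p
        have := ih (y' p) (hy' p) r (by omega)
        rw [him] at this
        have e : ∀ A B C D : K, (A * B) * (C * D) = (A * C) * (B * D) := by intros; ring
        simp_rw [e]
        rw [← mul_sum, this]
        ring
      simp_rw [h1, h2]
      rw [hsum (fun x => (∏ k ∈ range r, n (k + 1)) * (∏ k ∈ range (m - r), n (k + 1)) *
            (a x * (∏ j ∈ s.erase x, c x j) *
      ∑ I ∈ powersetCard r (s.erase x), (∏ i ∈ I, a i) * (∏ j ∈ (s.erase x) \ I, b j) *
        ∏ i' ∈ I, ∏ j ∈ (s.erase x) \ I, c i' j)), ← mul_sum, aux_insert a b c n hn, prod_range_succ, Nat.add_sub_add_right]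
      ring

open Finset in
theorem pair_count {α K : Type*} [LinearOrder α] [Field K] (t : K) (J : Finset α) :
    ∏ i ∈ J, ∏ j ∈ J, (if i < j then t else 1) = t ^ (J.card.choose 2) := by
  induction J using Finset.induction_on_max with
  | empty => simp
  | insert a J hJ ih =>
    have ha : a ∉ J := fun h => lt_irrefl _ (hJ a h)
    rw [prod_insert ha, card_insert_of_notMem ha, prod_insert ha]
    have h1 : ∏ j ∈ J, (if a < j then t else 1) = 1 :=
      prod_eq_one fun j hj => if_neg (hJ j hj).not_gt
    have h2 : ∏ i ∈ J, ∏ j ∈ insert a J, (if i < j then t else 1) =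
        ∏ i ∈ J, (t * ∏ j ∈ J, (if i < j then t else 1)) :=
      prod_congr rfl fun i hi => by rw [prod_insert ha, if_pos (hJ i hi)]
    rw [h1, h2, prod_mul_distrib, ih, prod_const, Nat.choose_succ_succ' _ 1, pow_add]
    simp

open Finset in
theorem pair_sym {m : ℕ} {K : Type*} [Field K] (d : Fin m → Fin m → K) (hd : ∀ i, d i i = 1) :
    ∏ i, ∏ j ∈ Ioi i, (d i j * d j i) = ∏ i, ∏ j, d i j := by
  have h0 : ∀ i, ∏ j ∈ Ioi i, (d i j * d j i) =
      (∏ j, if i < j then d i j else 1) * ∏ j, if i < j then d j i else 1 := by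
    intro i
    rw [← prod_filter, ← prod_filter, ← prod_mul_distrib]
    apply prod_congr _ (fun _ _ => rfl)
    ext; simp
  simp_rw [h0]
  rw [prod_mul_distrib]
  conv_lhs => rw [prod_comm (f := fun i j => if i < j then d j i else 1)]
  rw [← prod_mul_distrib]
  refine prod_congr rfl fun i _ => ?_
  rw [← prod_mul_distrib]
  refine prod_congr rfl fun j _ => ?_
  rcases lt_trichotomy i j with h | h | h
  · simp [h, h.not_gt]
  · simp [h, hd]
  · simp [h, h.not_gt]

open Finset in
theorem vand_ratio {m : ℕ} {K : Type*} [Field K] (t : K) (z : Fin m → K)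
    (hz : Function.Injective z) (I : Finset (Fin m)) :
    (Matrix.vandermonde (fun i => if i ∈ I then z i else t * z i)).det =
    (Matrix.vandermonde z).det * (t ^ ((univ \ I).card.choose 2) *
      ∏ i ∈ I, ∏ j ∈ univ \ I, (z i - t * z j) / (z i - z j)) := by
  have hc : ∏ i ∈ I, ∏ j ∈ univ \ I, (z i - t * z j) / (z i - z j) =
      ∏ i, ∏ j, (if i ∈ I ∧ j ∉ I then (z i - t * z j) / (z i - z j) else 1) := by
    rw [← prod_subset (subset_univ I)]
    · refine prod_congr rfl fun i hi => ?_
      rw [← prod_subset (subset_univ (univ \ I))]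
      · refine prod_congr rfl fun j hj => ?_
        rw [if_pos]; simpa [hi] using hj
      · intro j _ hj
        rw [if_neg]; simp at hj; simp [hj]
    · intro i _ hi
      simp [hi]
  have ht : t ^ ((univ \ I).card.choose 2) =
      ∏ i, ∏ j ∈ Ioi i, (if i ∉ I ∧ j ∉ I then t else 1) := by
    rw [← pair_count, ← prod_subset (subset_univ (univ \ I))]
    · refine prod_congr rfl fun i hi => ?_
      have hi' : i ∉ I := by simpa using hi
      rw [← prod_filter]
      simp only [hi', not_false_eq_true, true_and]
      rw [← prod_filter]
      refine prod_congr ?_ fun _ _ => rfl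
      ext j; simp [and_comm]
    · intro i _ hi
      simp at hi; simp [hi]
  rw [hc, ht, ← pair_sym _ (by simp), Matrix.det_vandermonde, Matrix.det_vandermonde]
  simp_rw [← prod_mul_distrib]
  refine prod_congr rfl fun i _ => prod_congr rfl fun j hj => ?_
  have hij : i ≠ j := (mem_Ioi.1 hj).ne
  have h1 : z i - z j ≠ 0 := sub_ne_zero.2 (fun h => hij (hz h))
  have h2 : z j - z i ≠ 0 := sub_ne_zero.2 (fun h => hij (hz h).symm)
  by_cases hi : i ∈ I <;> by_cases hj : j ∈ I <;> simp [hi, hj] <;> field_simp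
  ring

open Finset in
theorem det_zero {m : ℕ} (hm : 1 ≤ m) {K : Type*} [Field K] (q w : K) (z : Fin m → K) :
    (Matrix.of fun i k : Fin m => q ^ (m-1) * (w - q ^ (m-1) * z i) * z i ^ (k : ℕ) +
      (z i - q ^ (m-1) * w) * (q ^ 2 * z i) ^ (k : ℕ)).det = 0 := by
  have h : (Matrix.of fun i k : Fin m => q ^ (m-1) * (w - q ^ (m-1) * z i) * z i ^ (k : ℕ) +
      (z i - q ^ (m-1) * w) * (q ^ 2 * z i) ^ (k : ℕ)) = Matrix.vandermonde z *
      Matrix.of fun l k : Fin m => (if l = k then q ^ (m-1) * w * (1 - (q^2)^(k:ℕ)) else 0) +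
        (if (l : ℕ) = k + 1 then (q^2)^(k:ℕ) - (q^(m-1))^2 else 0) := by
    ext i k
    simp only [Matrix.mul_apply, Matrix.of_apply, Matrix.vandermonde_apply, mul_add, mul_ite,
      mul_zero, sum_add_distrib, sum_ite_eq', mem_univ, if_true]
    by_cases hk : (k : ℕ) + 1 < m
    · rw [sum_eq_single (⟨k+1, hk⟩ : Fin m)]
      · simp; ring
      · intro l _ hl
        rw [if_neg]; intro h; exact hl (Fin.ext h)
      · simp
    · have hk' : (k : ℕ) = m - 1 := by omega
      rw [sum_eq_zero]
      · rw [hk']; ring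
      · intro l _
        rw [if_neg]; omega
  rw [h, Matrix.det_mul]
  rw [Matrix.det_eq_zero_of_row_eq_zero (A := Matrix.of _) (⟨0, hm⟩ : Fin m), mul_zero]
  intro k
  by_cases hk : (⟨0, hm⟩ : Fin m) = k
  · subst hk; simp
  · simp [hk]

open Finset in
theorem subset_sum {m : ℕ} (hm : 1 ≤ m) {K : Type*} [Field K] (q w : K) (z : Fin m → K)
    (hz : Function.Injective z) :
    ∑ I : Finset (Fin m), (q ^ (m-1)) ^ I.card * (q^2) ^ ((univ \ I).card.choose 2) *
      ((∏ i ∈ I, (w - q ^ (m-1) * z i)) * (∏ j ∈ univ \ I, (z j - q ^ (m-1) * w)) *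
      ∏ i ∈ I, ∏ j ∈ univ \ I, (z i - q^2 * z j) / (z i - z j)) = 0 := by
  have h := det_zero hm q w z
  have h' : (Matrix.of fun i k : Fin m => q ^ (m-1) * (w - q ^ (m-1) * z i) * z i ^ (k : ℕ) +
      (z i - q ^ (m-1) * w) * (q ^ 2 * z i) ^ (k : ℕ)) =
      (fun i => (q ^ (m-1) * (w - q ^ (m-1) * z i)) • fun k : Fin m => z i ^ (k : ℕ)) +
      (fun i => (z i - q ^ (m-1) * w) • fun k : Fin m => (q ^ 2 * z i) ^ (k : ℕ)) := by
    ext i k; simp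
  rw [h'] at h
  change (Matrix.detRowAlternating (R := K) (n := Fin m)).toMultilinearMap _ = 0 at h
  rw [MultilinearMap.map_add_univ] at h
  have hV : (Matrix.vandermonde z).det ≠ 0 := Matrix.det_vandermonde_ne_zero_iff.2 hz
  refine (mul_eq_zero.1 (?_ : (Matrix.vandermonde z).det * _ = 0)).resolve_left hV
  rw [← h, mul_sum]
  refine sum_congr rfl fun I _ => ?_
  have : I.piecewise (fun i => (q ^ (m-1) * (w - q ^ (m-1) * z i)) • fun k : Fin m => z i ^ (k : ℕ))
      (fun i => (z i - q ^ (m-1) * w) • fun k : Fin m => (q ^ 2 * z i) ^ (k : ℕ)) =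
      fun i => (if i ∈ I then q ^ (m-1) * (w - q ^ (m-1) * z i) else z i - q ^ (m-1) * w) •
        fun k : Fin m => (if i ∈ I then z i else q^2 * z i) ^ (k : ℕ) := by
    ext i k
    by_cases hi : i ∈ I <;> simp [hi]
  rw [this, MultilinearMap.map_smul_univ]
  change _ = _ • (Matrix.vandermonde (fun i => if i ∈ I then z i else q^2 * z i)).det
  rw [vand_ratio _ _ hz, smul_eq_mul]
  have h3 : (∏ i, if i ∈ I then q ^ (m-1) * (w - q ^ (m-1) * z i) else z i - q ^ (m-1) * w) =
      (q ^ (m-1)) ^ I.card * (∏ i ∈ I, (w - q ^ (m-1) * z i)) *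
        (∏ j ∈ univ \ I, (z j - q ^ (m-1) * w)) := by
    rw [prod_ite, filter_mem_eq_inter, univ_inter, prod_mul_distrib, prod_const]
    congr 2
    ext; simp
  rw [h3]; ring

theorem qInt_eq {K : Type*} [Field K] (q : K) (hq : q ≠ 0) (h1 : q ^ 2 ≠ 1) (k : ℕ) :
    ∑ i ∈ Finset.range (k + 1), (q ^ 2) ^ i = q ^ k * qInt q (k + 1) := by
  have h : q ^ 2 - 1 ≠ 0 := sub_ne_zero.2 h1
  have h' : q - q⁻¹ ≠ 0 := by
    intro h2; apply h
    have : q * (q - q⁻¹) = q ^ 2 - 1 := by field_simp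
    rw [← this, h2, mul_zero]
  rw [geom_sum_eq h1, qInt, zpow_neg, zpow_natCast, ← mul_div_assoc, div_eq_div_iff h h']
  field_simp
  ring

open Finset in
theorem qFact_eq {K : Type*} [Field K] (q : K) (hq : q ≠ 0) (h1 : q ^ 2 ≠ 1) (r : ℕ) :
    ∏ k ∈ range r, ∑ i ∈ range (k + 1), (q ^ 2) ^ i = q ^ (r.choose 2) * qFact q r := by
  simp_rw [qInt_eq q hq h1]
  rw [prod_mul_distrib, prod_pow_eq_pow_sum, sum_range_id, Nat.choose_two_right]
  rfl

theorem qFact_ne {K : Type*} [Field K] (q : K) (m : ℕ) (hq : q ≠ 0)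
    (hroot : ∀ k : ℕ, 1 ≤ k → k ≤ m → q ^ (2 * k) ≠ 1) (r : ℕ) (hr : r ≤ m) :
    qFact q r ≠ 0 := by
  refine Finset.prod_ne_zero_iff.2 fun i hi => ?_
  have hi := Finset.mem_range.1 hi
  intro h
  have h1 : q ^ 2 ≠ 1 := by simpa using hroot 1 le_rfl (by omega)
  have h2 := qInt_eq q hq h1 i
  rw [h, mul_zero, geom_sum_eq h1, div_eq_zero_iff] at h2
  rcases h2 with h2 | h2
  · exact hroot (i + 1) (by omega) (by omega) (by rw [pow_mul]; exact sub_eq_zero.1 h2)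
  · exact h1 (sub_eq_zero.1 h2)

theorem choose_id (r d : ℕ) :
    r.choose 2 + d.choose 2 + (r + d).choose 2 = (r + d - 1) * r + 2 * d.choose 2 := by
  have e : ∀ n : ℕ, 2 * n.choose 2 = n * (n - 1) := by
    intro n
    rw [Nat.choose_two_right, Nat.mul_div_cancel' (Nat.even_mul_pred_self n).two_dvd]
  have hr := e r
  have hd := e d
  have hs := e (r + d)
  rcases r with _ | r
  · simp; omega
  rcases d with _ | d
  · simp at hr hs ⊢; nlinarith
  simp only [Nat.add_sub_cancel, show r + 1 + (d + 1) - 1 = r + d + 1 by omega] at *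
  nlinarith



/-- The combinatorial identity (Ser3) for Hall–Littlewood-type products:
∑_{σ ∈ S_m} ∑_{r=0}^{m} [m choose r] (∏_{k=1}^{r} (w − q^{m−1} z_{σ(k)}))
(∏_{k=r+1}^{m} (z_{σ(k)} − q^{m−1} w)) ∏_{i<j} (z_{σ(i)} − q² z_{σ(j)})/(z_{σ(i)} − z_{σ(j)}) = 0. -/
theorem combinatorial_identity_Ser3 {K : Type*} [Field K] (m : ℕ) (hm : 1 ≤ m) (q : K)
    (hq : q ≠ 0) (hroot : ∀ k : ℕ, 1 ≤ k → k ≤ m → q ^ (2 * k) ≠ 1)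
    (w : K) (z : Fin m → K) (hz : Function.Injective z) :
    ∑ σ : Equiv.Perm (Fin m), ∑ r ∈ Finset.range (m + 1),
      qBinom q m r *
        (∏ k : Fin m,
          if (k : ℕ) < r then w - q ^ ((m : ℤ) - 1) * z (σ k)
          else z (σ k) - q ^ ((m : ℤ) - 1) * w) *
        ∏ p ∈ Finset.univ.filter (fun p : Fin m × Fin m => p.1 < p.2),
          (z (σ p.1) - q ^ 2 * z (σ p.2)) / (z (σ p.1) - z (σ p.2)) = 0 := by
  classical
  have h1 : q ^ 2 ≠ 1 := by simpa using hroot 1 le_rfl hm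
  have hQ : q ^ ((m : ℤ) - 1) = q ^ (m - 1) := by
    rw [← zpow_natCast, Nat.cast_sub hm]; simp
  rw [hQ, Finset.sum_comm]
  have hS := subset_sum hm q w z hz
  have hq2 : q ^ (m.choose 2) ≠ 0 := pow_ne_zero _ hq
  refine (mul_eq_zero.1 (?_ : q ^ (m.choose 2) * _ = 0)).resolve_left hq2
  rw [← mul_zero (qFact q m), ← hS, ← Finset.powerset_univ, Finset.sum_powerset,
    Finset.card_univ, Fintype.card_fin, Finset.mul_sum, Finset.mul_sum]
  refine Finset.sum_congr rfl fun r hr => ?_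
  have hr : r ≤ m := by have := Finset.mem_range.1 hr; omega
  have hp := perm_sum (fun i => w - q ^ (m - 1) * z i) (fun i => z i - q ^ (m - 1) * w)
    (fun i j => (z i - q ^ 2 * z j) / (z i - z j)) (fun n => ∑ k ∈ Finset.range n, (q ^ 2) ^ k) (qsum' (q ^ 2) h1 z hz) m id
    Function.injective_id r hr
  have hpair : ∀ σ : Equiv.Perm (Fin m),
      ∏ p ∈ Finset.univ.filter (fun p : Fin m × Fin m => p.1 < p.2),
          (z (σ p.1) - q ^ 2 * z (σ p.2)) / (z (σ p.1) - z (σ p.2)) =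
      ∏ i, ∏ j, if i < j then (z (σ i) - q ^ 2 * z (σ j)) / (z (σ i) - z (σ j)) else 1 := by
    intro σ
    rw [Finset.prod_filter, Fintype.prod_prod_type]
  simp only [Finset.image_id, id] at hp
  simp_rw [hpair, mul_assoc (qBinom q m r)]
  rw [← Finset.mul_sum, hp, qFact_eq q hq h1, qFact_eq q hq h1, Finset.mul_sum, Finset.mul_sum,
    Finset.mul_sum, Finset.mul_sum]
  refine Finset.sum_congr rfl fun I hI => ?_
  have hI := (Finset.mem_powersetCard.1 hI).2
  have hI' : (Finset.univ \ I).card = m - r := by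
    rw [Finset.card_sdiff_of_subset (Finset.subset_univ _), hI]; simp
  rw [hI, hI']
  have hf1 := qFact_ne q m hq hroot r hr
  have hf2 := qFact_ne q m hq hroot (m - r) (by omega)
  have hc := choose_id r (m - r)
  rw [Nat.add_sub_cancel' hr] at hc
  have hpw := congrArg (fun k => q ^ k) hc
  simp only [pow_add, pow_mul] at hpw
  rw [← hpw, qBinom]
  generalize (∏ i ∈ I, (w - q ^ (m-1) * z i)) * (∏ j ∈ Finset.univ \ I, (z j - q ^ (m-1) * w)) *
      ∏ i ∈ I, ∏ j ∈ Finset.univ \ I, (z i - q^2 * z j) / (z i - z j) = X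
  field_simp
end
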